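/- arXiv:1801.09909 — 8 statements merged into one kernel-verified Lean document; each statement's English description precedes it below -/
import Mathlib

section
/- Let r > 0 and s ≥ 0, and let G₀, G_r : [0,∞) → [0,∞) be measurable functions satisfying the renewal identity G_r(T) = ∫₀^T r·e^{−rt}·G₀(t)·G_r(T−t) dt + e^{−rT}·G₀(T) for every T ≥ 0. If the Laplace transform G̃₀(r+s) = ∫₀^∞ e^{−(r+s)T}·G₀(T) dT is finite and satisfies r·G̃₀(r+s) < 1, and if G̃_r(s) = ∫₀^∞ e^{−sT}·G_r(T) dT is finite, then G̃_r(s) = G̃₀(r+s) / (1 − r·G̃₀(r+s)). -/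
open MeasureTheory Set Real

/-- **Renewal formula for the Laplace transform of the generating function**
(Theorem 1 of "Properties of additive functionals of Brownian motion with resetting").
If `G₀, Gᵣ` are nonnegative measurable functions on `[0,∞)` satisfying the renewal identity
obtained by conditioning on the first reset time, and the relevant Laplace transforms are
finite with `r·G̃₀(r+s) < 1`, then `G̃ᵣ(s) = G̃₀(r+s)/(1 - r·G̃₀(r+s))`. -/
theorem renewal_laplace_formula
    (r s : ℝ) (hr : 0 < r) (hs : 0 ≤ s)
    (G0 Gr : ℝ → ℝ)
    (hG0meas : Measurable G0) (hGrmeas : Measurable Gr)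
    (hG0nn : ∀ T, 0 ≤ T → 0 ≤ G0 T) (hGrnn : ∀ T, 0 ≤ T → 0 ≤ Gr T)
    (hrenewal : ∀ T, 0 ≤ T →
      Gr T = (∫ t in Ioc (0:ℝ) T, r * Real.exp (-r * t) * G0 t * Gr (T - t))
              + Real.exp (-r * T) * G0 T)
    (hG0int : IntegrableOn (fun T => Real.exp (-(r + s) * T) * G0 T) (Ioi 0))
    (hlt : r * (∫ T in Ioi (0:ℝ), Real.exp (-(r + s) * T) * G0 T) < 1)
    (hGrint : IntegrableOn (fun T => Real.exp (-s * T) * Gr T) (Ioi 0)) :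
    (∫ T in Ioi (0:ℝ), Real.exp (-s * T) * Gr T)
      = (∫ T in Ioi (0:ℝ), Real.exp (-(r + s) * T) * G0 T)
        / (1 - r * (∫ T in Ioi (0:ℝ), Real.exp (-(r + s) * T) * G0 T)) := by
  set A := ∫ T in Ioi (0:ℝ), Real.exp (-(r + s) * T) * G0 T with hA
  set B := ∫ T in Ioi (0:ℝ), Real.exp (-s * T) * Gr T with hB
  have hconv := integral_posConvolution (μ := volume) (ν := volume) hG0int hGrint
    (ContinuousLinearMap.mul ℝ ℝ)
  simp only [ContinuousLinearMap.mul_apply'] at hconv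
  rw [← hA, ← hB] at hconv
  have hpt : ∀ T ∈ Ioi (0:ℝ), (∫ t in (0:ℝ)..T, (Real.exp (-(r + s) * t) * G0 t) *
      (Real.exp (-s * (T - t)) * Gr (T - t)))
      = r⁻¹ * (Real.exp (-s * T) * Gr T - Real.exp (-(r + s) * T) * G0 T) := by
    intro T hT
    have hT' : (0:ℝ) ≤ T := le_of_lt hT
    have h1 : (∫ t in Ioc (0:ℝ) T, r * Real.exp (-r * t) * G0 t * Gr (T - t))
        = Gr T - Real.exp (-r * T) * G0 T := by
      linarith [hrenewal T hT']
    have h2 : Real.exp (-(r + s) * T) = Real.exp (-s * T) * Real.exp (-r * T) := by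
      rw [← Real.exp_add]; ring_nf
    have h3 : r⁻¹ * (Real.exp (-s * T) * Gr T - Real.exp (-(r + s) * T) * G0 T)
        = (r⁻¹ * Real.exp (-s * T)) * (Gr T - Real.exp (-r * T) * G0 T) := by
      rw [h2]; ring
    rw [h3, ← h1, intervalIntegral.integral_of_le hT', ← integral_const_mul]
    congr 1
    funext t
    have h4 : Real.exp (-(r + s) * t) * Real.exp (-s * (T - t))
        = Real.exp (-s * T) * Real.exp (-r * t) := by
      rw [← Real.exp_add, ← Real.exp_add]; ring_nf
    calc _ = (Real.exp (-(r + s) * t) * Real.exp (-s * (T - t))) * (G0 t * Gr (T - t)) := by ring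
      _ = _ := by rw [h4]; field_simp
  rw [setIntegral_congr_fun measurableSet_Ioi hpt, integral_const_mul,
    integral_sub hGrint hG0int, ← hA, ← hB] at hconv
  rw [eq_div_iff (by linarith)]
  field_simp at hconv
  linarith
end

section
/- Let r ≥ 0 and let λ₁, λ₂ > 0 satisfy √(λ₁λ₂) > r. Define H : (0,∞) × (0,∞) → [0,∞) by H(t₁,t₂) = Σ_{j=0}^∞ r^j · (t₁t₂)^{(j−1)/2} / Γ((j+1)/2)², where Γ is the Gamma function. Then the series converges for all t₁, t₂ > 0 and ∫₀^∞ ∫₀^∞ e^{−λ₁t₁ − λ₂t₂} · H(t₁,t₂) dt₁ dt₂ = 1/(√(λ₁λ₂) − r). -/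
open MeasureTheory Set Real

lemma aux_ratio (a : ℕ → ℝ) (ha : ∀ k, 0 ≤ a k) (c s : ℝ) (hs : 0 < s)
    (h : ∀ k : ℕ, a (k + 1) = a k * (c / (k + s))) : Summable a := by
  apply summable_of_ratio_norm_eventually_le (r := 1 / 2) (by norm_num)
  obtain ⟨N, hN⟩ := exists_nat_ge (2 * c)
  filter_upwards [Filter.eventually_ge_atTop N] with k hk
  rw [Real.norm_of_nonneg (ha _), Real.norm_of_nonneg (ha _), h, mul_comm]
  apply mul_le_mul_of_nonneg_right _ (ha k)
  have hk' : (N : ℝ) ≤ k := by exact_mod_cast hk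
  have : (0 : ℝ) ≤ k := by positivity
  rw [div_le_iff₀ (by positivity)]
  linarith

lemma aux_summable (y : ℝ) (hy : 0 ≤ y) :
    Summable (fun j : ℕ => y ^ j / Real.Gamma (((j : ℝ) + 1) / 2)) := by
  have hpos : ∀ j : ℕ, 0 < Real.Gamma (((j : ℝ) + 1) / 2) := fun j =>
    Real.Gamma_pos_of_pos (by positivity)
  have rec2 : ∀ j : ℕ, Real.Gamma ((((j + 2 : ℕ) : ℝ) + 1) / 2)
      = (((j : ℝ) + 1) / 2) * Real.Gamma (((j : ℝ) + 1) / 2) := by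
    intro j
    rw [← Real.Gamma_add_one (by positivity)]
    congr 1
    push_cast
    ring
  have he : Summable (fun k : ℕ => y ^ (2 * k) / Real.Gamma ((((2 * k : ℕ) : ℝ) + 1) / 2)) := by
    apply aux_ratio _ (fun k => div_nonneg (by positivity) (hpos _).le) (y ^ 2) (1 / 2) (by norm_num)
    intro k
    have := (hpos (2 * k)).ne'
    rw [show 2 * (k + 1) = 2 * k + 2 by ring, rec2, pow_add]
    have e : (((2 * k : ℕ) : ℝ) + 1) / 2 = k + 1 / 2 := by push_cast; ring
    rw [e] at this ⊢
    have : (k : ℝ) + 1 / 2 ≠ 0 := by positivity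
    rw [div_mul_div_comm, mul_comm (Real.Gamma _)]
  have ho : Summable (fun k : ℕ =>
      y ^ (2 * k + 1) / Real.Gamma ((((2 * k + 1 : ℕ) : ℝ) + 1) / 2)) := by
    apply aux_ratio _ (fun k => div_nonneg (by positivity) (hpos _).le) (y ^ 2) 1 (by norm_num)
    intro k
    rw [show 2 * (k + 1) + 1 = (2 * k + 1) + 2 by ring, rec2, pow_add _ _ 2]
    have e : (((2 * k + 1 : ℕ) : ℝ) + 1) / 2 = k + 1 := by push_cast; ring
    rw [e, div_mul_div_comm, mul_comm (Real.Gamma _)]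
  have key := HasSum.even_add_odd
    (f := fun j : ℕ => y ^ j / Real.Gamma (((j : ℝ) + 1) / 2)) he.hasSum ho.hasSum
  exact key.summable

lemma aux_pow (x : ℝ) (hx : 0 < x) (j : ℕ) :
    x ^ (((j : ℝ) - 1) / 2) = x ^ (-(1 / 2) : ℝ) * √x ^ j := by
  rw [Real.sqrt_eq_rpow, ← Real.rpow_natCast, ← Real.rpow_mul hx.le, ← Real.rpow_add hx]
  congr 1
  ring

lemma aux_pow' (x : ℝ) (hx : 0 < x) (j : ℕ) :
    (1 / x) ^ (((j : ℝ) + 1) / 2) = (√x)⁻¹ * (√x)⁻¹ ^ j := by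
  rw [Real.sqrt_eq_rpow, ← Real.rpow_neg hx.le, ← Real.rpow_natCast, ← Real.rpow_mul hx.le,
    ← Real.rpow_add hx, one_div, Real.inv_rpow hx.le, ← Real.rpow_neg hx.le]
  congr 1
  ring

lemma aux_int (l : ℝ) (hl : 0 < l) (j : ℕ) :
    IntegrableOn (fun t : ℝ => t ^ (((j : ℝ) - 1) / 2) * Real.exp (-(l * t))) (Ioi 0) ∧
    ∫ t in Ioi (0 : ℝ), t ^ (((j : ℝ) - 1) / 2) * Real.exp (-(l * t))
      = (√l)⁻¹ * (√l)⁻¹ ^ j * Real.Gamma (((j : ℝ) + 1) / 2) := by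
  constructor
  · have hj : (0 : ℝ) ≤ j := by positivity
    have := integrableOn_rpow_mul_exp_neg_mul_rpow (s := ((j : ℝ) - 1) / 2) (p := 1)
      (by linarith) one_pos hl
    simpa using this
  · have := Real.integral_rpow_mul_exp_neg_mul_Ioi (a := ((j : ℝ) + 1) / 2) (by positivity) hl
    rw [aux_pow' l hl] at this
    rw [← this]
    congr! 4
    ring

/-- one-dimensional termwise Laplace transform -/
lemma aux_laplace (l : ℝ) (hl : 0 < l) (c : ℕ → ℝ) (hc : ∀ j, 0 ≤ c j)
    (hs : Summable (fun j : ℕ => c j * ((√l)⁻¹ ^ j * Real.Gamma (((j : ℝ) + 1) / 2)))) :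
    ∫ t in Ioi (0 : ℝ), ∑' j : ℕ, c j * (t ^ (((j : ℝ) - 1) / 2) * Real.exp (-(l * t)))
      = (√l)⁻¹ * ∑' j : ℕ, c j * ((√l)⁻¹ ^ j * Real.Gamma (((j : ℝ) + 1) / 2)) := by
  have hval : ∀ j : ℕ, ∫ t in Ioi (0 : ℝ), c j * (t ^ (((j : ℝ) - 1) / 2) * Real.exp (-(l * t)))
      = (√l)⁻¹ * (c j * ((√l)⁻¹ ^ j * Real.Gamma (((j : ℝ) + 1) / 2))) := by
    intro j
    rw [integral_const_mul, (aux_int l hl j).2]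
    ring
  have key := hasSum_integral_of_summable_integral_norm (μ := volume.restrict (Ioi (0 : ℝ)))
    (F := fun (j : ℕ) (t : ℝ) => c j * (t ^ (((j : ℝ) - 1) / 2) * Real.exp (-(l * t))))
    (fun j => (aux_int l hl j).1.const_mul _) (by
      refine (hs.mul_left (√l)⁻¹).congr fun j => ?_
      rw [← hval]
      refine setIntegral_congr_fun measurableSet_Ioi fun t ht => ?_
      have ht' : (0 : ℝ) < t := ht
      have := hc j
      exact (Real.norm_of_nonneg (by positivity)).symm)
  rw [← key.tsum_eq, ← tsum_mul_left]
  exact tsum_congr hval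

/-- **Double Laplace transform of the occupation-time kernel** (core of Theorem 4).
For `r ≥ 0` and `λ₁, λ₂ > 0` with `√(λ₁λ₂) > r`, the series
`H(t₁,t₂) = ∑_{j≥0} rʲ (t₁t₂)^{(j-1)/2} / Γ((j+1)/2)²` converges for all `t₁,t₂ > 0`, and
`∫₀^∞∫₀^∞ e^{-λ₁t₁-λ₂t₂} H(t₁,t₂) dt₁ dt₂ = 1/(√(λ₁λ₂) - r)`. -/
theorem double_laplace_occupation_kernel
    (r : ℝ) (hr : 0 ≤ r) (l1 l2 : ℝ) (hl1 : 0 < l1) (hl2 : 0 < l2)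
    (hgt : r < Real.sqrt (l1 * l2)) :
    (∀ t1 t2 : ℝ, 0 < t1 → 0 < t2 →
      Summable (fun j : ℕ =>
        r ^ j * (t1 * t2) ^ (((j : ℝ) - 1) / 2) / (Real.Gamma (((j : ℝ) + 1) / 2)) ^ 2)) ∧
    (∫ t1 in Ioi (0:ℝ), ∫ t2 in Ioi (0:ℝ),
        Real.exp (-l1 * t1 - l2 * t2) *
          (∑' j : ℕ,
            r ^ j * (t1 * t2) ^ (((j : ℝ) - 1) / 2) / (Real.Gamma (((j : ℝ) + 1) / 2)) ^ 2))
      = 1 / (Real.sqrt (l1 * l2) - r) := by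
  have hpos : ∀ j : ℕ, 0 < Real.Gamma (((j : ℝ) + 1) / 2) := fun j =>
    Real.Gamma_pos_of_pos (by positivity)
  constructor
  · intro t1 t2 h1 h2
    have hx : 0 < t1 * t2 := mul_pos h1 h2
    have A := aux_summable (r * √(t1 * t2)) (by positivity)
    have B := aux_summable 1 zero_le_one
    have C := (Summable.mul_of_nonneg A B
      (fun j => div_nonneg (by positivity) (hpos j).le)
      (fun j => div_nonneg (by positivity) (hpos j).le)).comp_injective
        (i := fun j : ℕ => (j, j)) (fun a b h => (Prod.mk.inj h).1)
    refine (C.mul_left ((t1 * t2) ^ (-(1 / 2) : ℝ))).congr fun j => ?_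
    have := (hpos j).ne'
    simp only [Function.comp]
    rw [aux_pow _ hx, mul_pow]
    field_simp
    simp
  · have hs1 : 0 < √l1 := Real.sqrt_pos.2 hl1
    have hs2 : 0 < √l2 := Real.sqrt_pos.2 hl2
    rw [Real.sqrt_mul hl1.le] at hgt ⊢
    have inner : ∀ t1 ∈ Ioi (0 : ℝ), (∫ t2 in Ioi (0:ℝ),
        Real.exp (-l1 * t1 - l2 * t2) *
          (∑' j : ℕ,
            r ^ j * (t1 * t2) ^ (((j : ℝ) - 1) / 2) / (Real.Gamma (((j : ℝ) + 1) / 2)) ^ 2))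
        = ∑' j : ℕ, ((√l2)⁻¹ * (r ^ j * (√l2)⁻¹ ^ j / Real.Gamma (((j : ℝ) + 1) / 2))) *
            (t1 ^ (((j : ℝ) - 1) / 2) * Real.exp (-(l1 * t1))) := by
      intro t1 ht1
      have h1 : (0 : ℝ) < t1 := ht1
      have L := aux_laplace l2 hl2 (fun j => Real.exp (-(l1 * t1)) * (r ^ j *
        t1 ^ (((j : ℝ) - 1) / 2) / (Real.Gamma (((j : ℝ) + 1) / 2)) ^ 2))
        (fun j => by have := hpos j; positivity) (by
          refine ((aux_summable (r * √t1 * (√l2)⁻¹) (by positivity)).mul_left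
            (Real.exp (-(l1 * t1)) * t1 ^ (-(1 / 2) : ℝ))).congr fun j => ?_
          have := (hpos j).ne'
          rw [aux_pow _ h1, mul_pow, mul_pow]
          field_simp)
      rw [← tsum_mul_left] at L
      refine Eq.trans ?_ (L.trans ?_)
      · refine setIntegral_congr_fun measurableSet_Ioi fun t2 ht2 => ?_
        have h2 : (0 : ℝ) < t2 := ht2
        rw [← tsum_mul_left]
        refine tsum_congr fun j => ?_
        rw [Real.mul_rpow h1.le h2.le,
          show -l1 * t1 - l2 * t2 = -(l1 * t1) + -(l2 * t2) by ring, Real.exp_add]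
        ring
      · refine tsum_congr fun j => ?_
        have := (hpos j).ne'
        field_simp
    rw [setIntegral_congr_fun measurableSet_Ioi inner]
    have hq : r * (√l2)⁻¹ * (√l1)⁻¹ < 1 := by
      rw [← div_eq_mul_inv, ← div_eq_mul_inv, div_div, div_lt_one (by positivity)]
      linarith
    have hq0 : 0 ≤ r * (√l2)⁻¹ * (√l1)⁻¹ := by positivity
    have e : ∀ j : ℕ, (√l2)⁻¹ * (r * (√l2)⁻¹ * (√l1)⁻¹) ^ j
        = ((√l2)⁻¹ * (r ^ j * (√l2)⁻¹ ^ j / Real.Gamma (((j : ℝ) + 1) / 2))) *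
          ((√l1)⁻¹ ^ j * Real.Gamma (((j : ℝ) + 1) / 2)) := by
      intro j
      have := (hpos j).ne'
      rw [mul_pow, mul_pow]
      field_simp
    rw [aux_laplace l1 hl1 _ (fun j => by have := hpos j; positivity)
      (((summable_geometric_of_lt_one hq0 hq).mul_left (√l2)⁻¹).congr e),
      ← tsum_congr e, tsum_mul_left, tsum_geometric_of_lt_one hq0 hq]
    have h3 : √l1 * √l2 - r ≠ 0 := by linarith
    have h4 : 1 - r * (√l2)⁻¹ * (√l1)⁻¹ = (√l1 * √l2 - r) / (√l1 * √l2) := by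
      field_simp
    rw [h4]
    field_simp
end

section
/- Define W : (0,∞) → ℝ by W(x) = (1/x) · Σ_{j=0}^∞ x^j / Γ((j+1)/2)², where Γ is the Gamma function. Fix r > 0 and a ∈ (0,1). Then lim_{T→∞} (1/T) · log[ (r/T) · e^{−rT} · W(rT√(a(1−a))) ] = −r(1 − 2√(a(1−a))). -/
open MeasureTheory Set Real Filter

/-- The scaling function `W` appearing in the density of the positive occupation time of
reset Brownian motion: `W(x) = (1/x) ∑_{j≥0} xʲ / Γ((j+1)/2)²`. -/
noncomputable def occScalingW (x : ℝ) : ℝ :=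
  (1 / x) * ∑' j : ℕ, x ^ j / (Real.Gamma (((j : ℝ) + 1) / 2)) ^ 2

noncomputable def gHalf (j : ℕ) : ℝ := Real.Gamma (((j : ℝ) + 1) / 2)

lemma gHalf_pos (j : ℕ) : 0 < gHalf j := Real.Gamma_pos_of_pos (by positivity)

lemma gHalf_mul (j : ℕ) : gHalf j * gHalf (j + 1) * 2 ^ j = Real.sqrt π * (j.factorial : ℝ) := by
  have h := Real.Gamma_mul_Gamma_add_half (((j : ℝ) + 1) / 2)
  have e1 : 2 * (((j : ℝ) + 1) / 2) = j + 1 := by ring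
  have e2 : ((j : ℝ) + 1) / 2 + 1 / 2 = (((j + 1 : ℕ) : ℝ) + 1) / 2 := by push_cast; ring
  rw [e1, e2, Real.Gamma_nat_eq_factorial] at h
  have e3 : (1 : ℝ) - (j + 1) = -(j : ℝ) := by ring
  rw [e3, Real.rpow_neg (by norm_num), Real.rpow_natCast] at h
  unfold gHalf
  rw [h]
  field_simp

lemma gHalf_succ_le (j : ℕ) : gHalf (j + 1) ≤ (j + 1) * gHalf j := by
  have h0 := gHalf_pos j
  have h := Real.Gamma_mul_add_mul_le_rpow_Gamma_mul_rpow_Gamma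
    (s := ((j : ℝ) + 1) / 2) (t := ((j : ℝ) + 1) / 2 + 1) (a := 1 / 2) (b := 1 / 2)
    (by positivity) (by positivity) (by norm_num) (by norm_num) (by norm_num)
  have e2 : 1 / 2 * (((j : ℝ) + 1) / 2) + 1 / 2 * (((j : ℝ) + 1) / 2 + 1)
    = (((j + 1 : ℕ) : ℝ) + 1) / 2 := by push_cast; ring
  rw [e2, Real.Gamma_add_one (by positivity), ← Real.sqrt_eq_rpow, ← Real.sqrt_eq_rpow] at h
  change gHalf (j + 1) ≤ √(gHalf j) * √((((j : ℝ) + 1) / 2) * gHalf j) at h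
  refine h.trans ?_
  rw [← Real.sqrt_mul h0.le]
  apply Real.sqrt_le_iff.mpr
  refine ⟨by positivity, ?_⟩
  have : ((j : ℝ) + 1) / 2 ≤ (j + 1) ^ 2 := by
    have : (0 : ℝ) ≤ j := by positivity
    nlinarith
  nlinarith [mul_le_mul_of_nonneg_right this (sq_nonneg (gHalf j))]

lemma hasSum_b (x : ℝ) :
    HasSum (fun j : ℕ => x ^ j / (gHalf j * gHalf (j + 1))) (Real.exp (2 * x) / √π) := by
  have h := NormedSpace.expSeries_div_hasSum_exp (2 * x)
  rw [← Real.exp_eq_exp_ℝ] at h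
  have h2 := h.div_const (√π)
  convert! h2 using 2 with j
  have h1 := gHalf_mul j
  have := gHalf_pos j
  have := gHalf_pos (j + 1)
  have : 0 < √π := by positivity
  have : (0 : ℝ) < j.factorial := by positivity
  rw [mul_pow, div_div, div_eq_div_iff (by positivity) (by positivity)]
  linear_combination (-x ^ j) * h1

lemma hasSum_c (x : ℝ) :
    HasSum (fun j : ℕ => ((j : ℝ) + 1) * (x ^ j / (gHalf j * gHalf (j + 1))))
      ((2 * x + 1) * Real.exp (2 * x) / √π) := by
  have h := NormedSpace.expSeries_div_hasSum_exp (2 * x)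
  rw [← Real.exp_eq_exp_ℝ] at h
  have h3 : HasSum (fun j : ℕ => (j : ℝ) * ((2 * x) ^ j / j.factorial))
      (2 * x * Real.exp (2 * x)) := by
    rw [← hasSum_nat_add_iff' 1]
    simp only [Finset.range_one, Finset.sum_singleton, Nat.cast_zero, zero_mul, sub_zero]
    convert! h.mul_left (2 * x) using 2 with j
    rw [Nat.factorial_succ]
    have : (0 : ℝ) < j.factorial := by positivity
    push_cast
    field_simp
    ring
  have h4 := (h3.add h).div_const (√π)
  convert! h4 using 2 with j
  · have h1 := gHalf_mul j
    have := gHalf_pos j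
    have := gHalf_pos (j + 1)
    have : 0 < √π := by positivity
    have : (0 : ℝ) < j.factorial := by positivity
    have e : x ^ j / (gHalf j * gHalf (j + 1)) = (2 * x) ^ j / j.factorial / √π := by
      rw [mul_pow, div_div, div_eq_div_iff (by positivity) (by positivity)]
      linear_combination (-x ^ j) * h1
    rw [e]; ring
  · ring

lemma term_le (x : ℝ) (hx : 0 ≤ x) (j : ℕ) :
    x ^ j / gHalf j ^ 2 ≤ ((j : ℝ) + 1) * (x ^ j / (gHalf j * gHalf (j + 1))) := by
  have := gHalf_pos j
  have := gHalf_pos (j + 1)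
  rw [← mul_div_assoc, div_le_div_iff₀ (by positivity) (by positivity)]
  have h := mul_le_mul_of_nonneg_left (gHalf_succ_le j)
    (show 0 ≤ x ^ j * gHalf j by positivity)
  nlinarith [h]

lemma summable_a (x : ℝ) (hx : 0 ≤ x) : Summable (fun j : ℕ => x ^ j / gHalf j ^ 2) :=
  Summable.of_nonneg_of_le (fun j => by positivity) (term_le x hx) (hasSum_c x).summable

lemma S_le (x : ℝ) (hx : 0 ≤ x) :
    ∑' j : ℕ, x ^ j / gHalf j ^ 2 ≤ (2 * x + 1) * Real.exp (2 * x) / √π := by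
  rw [← (hasSum_c x).tsum_eq]
  exact (summable_a x hx).tsum_le_tsum (term_le x hx) (hasSum_c x).summable

lemma le_S (x : ℝ) (hx : 1 ≤ x) :
    Real.exp (2 * x) / √π ≤ ∑' j : ℕ, x ^ j / gHalf j ^ 2 := by
  have hx0 : 0 ≤ x := by linarith
  have hs := summable_a x hx0
  have hs1 : Summable (fun j : ℕ => x ^ (j + 1) / gHalf (j + 1) ^ 2) :=
    (summable_nat_add_iff 1).mpr hs
  have hle : ∑' j : ℕ, x ^ (j + 1) / gHalf (j + 1) ^ 2 ≤ ∑' j : ℕ, x ^ j / gHalf j ^ 2 := by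
    rw [hs.tsum_eq_zero_add]
    have : 0 ≤ x ^ 0 / gHalf 0 ^ 2 := by positivity
    linarith
  have hb := (hasSum_b x).summable.tsum_le_tsum (g := fun j : ℕ =>
    (x ^ j / gHalf j ^ 2 + x ^ (j + 1) / gHalf (j + 1) ^ 2) * (1 / 2)) ?_
    ((hs.add hs1).mul_right _)
  · rw [(hasSum_b x).tsum_eq, tsum_mul_right, hs.tsum_add hs1] at hb
    linarith
  · intro j
    have := gHalf_pos j
    have := gHalf_pos (j + 1)
    have h1 : x ^ j / gHalf (j + 1) ^ 2 ≤ x ^ (j + 1) / gHalf (j + 1) ^ 2 := by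
      gcongr
      omega
    have h2 : x ^ j / (gHalf j * gHalf (j + 1)) ≤
        (x ^ j / gHalf j ^ 2 + x ^ j / gHalf (j + 1) ^ 2) * (1 / 2) := by
      have h3 := mul_nonneg (pow_nonneg hx0 j) (sq_nonneg (1 / gHalf j - 1 / gHalf (j + 1)))
      have e : x ^ j * (1 / gHalf j - 1 / gHalf (j + 1)) ^ 2 = x ^ j / gHalf j ^ 2
          + x ^ j / gHalf (j + 1) ^ 2 - 2 * (x ^ j / (gHalf j * gHalf (j + 1))) := by
        field_simp
        ring
      linarith
    show x ^ j / (gHalf j * gHalf (j + 1)) ≤ _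
    linarith

/-- **Large deviation rate of the occupation-time density**: for reset rate `r > 0` and
`a ∈ (0,1)`, `(1/T) log[(r/T) e^{-rT} W(rT√(a(1-a)))] → -r(1 - 2√(a(1-a)))` as `T → ∞`. -/
theorem occupation_density_ld_rate (r a : ℝ) (hr : 0 < r) (ha0 : 0 < a) (ha1 : a < 1) :
    Tendsto (fun T : ℝ =>
        (1 / T) * Real.log ((r / T) * Real.exp (-r * T)
          * occScalingW (r * T * Real.sqrt (a * (1 - a)))))
      atTop (nhds (-(r * (1 - 2 * Real.sqrt (a * (1 - a)))))) := by
  have hq : 0 < √(a * (1 - a)) := Real.sqrt_pos.mpr (mul_pos ha0 (by linarith))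
  set q := √(a * (1 - a)) with hqdef
  have hc : 0 < r * q := mul_pos hr hq
  have hlog : Tendsto (fun T : ℝ => Real.log T / T) atTop (nhds 0) :=
    Real.isLittleO_log_id_atTop.tendsto_div_nhds_zero
  have hinv : Tendsto (fun T : ℝ => T⁻¹) atTop (nhds 0) := tendsto_inv_atTop_zero
  have hl : Tendsto (fun T : ℝ => -(r * (1 - 2 * q)) +
      (Real.log r - Real.log (r * q) - Real.log (√π)) * T⁻¹ - 2 * (Real.log T / T))
      atTop (nhds (-(r * (1 - 2 * q)))) := by
    simpa using (((hinv.const_mul (Real.log r - Real.log (r * q) - Real.log (√π))).const_add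
      (-(r * (1 - 2 * q)))).sub (hlog.const_mul 2))
  have hu : Tendsto (fun T : ℝ => -(r * (1 - 2 * q)) +
      (Real.log r + Real.log 3 - Real.log (√π)) * T⁻¹ - (Real.log T / T))
      atTop (nhds (-(r * (1 - 2 * q)))) := by
    simpa using (((hinv.const_mul (Real.log r + Real.log 3 - Real.log (√π))).const_add
      (-(r * (1 - 2 * q)))).sub hlog)
  have key : ∀ᶠ T : ℝ in atTop, 0 < T ∧ 1 ≤ r * T * q := by
    filter_upwards [eventually_gt_atTop 0, eventually_ge_atTop (1 / (r * q))] with T h1 h2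
    refine ⟨h1, ?_⟩
    rw [div_le_iff₀ hc] at h2
    linarith
  have main : ∀ T : ℝ, 0 < T → 1 ≤ r * T * q → ∃ L : ℝ,
      (1 / T) * Real.log ((r / T) * Real.exp (-r * T) * occScalingW (r * T * q))
        = (1 / T) * (Real.log r - Real.log T - r * T - (Real.log (r * q) + Real.log T) + L) ∧
      2 * (r * T * q) - Real.log (√π) ≤ L ∧
      L ≤ Real.log 3 + (Real.log (r * q) + Real.log T) + 2 * (r * T * q) - Real.log (√π) := by
    intro T hT hx
    have hp : 0 < √π := by positivity
    have hx0 : 0 < r * T * q := by positivity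
    have lx : Real.log (r * T * q) = Real.log (r * q) + Real.log T := by
      rw [← Real.log_mul hc.ne' hT.ne']; congr 1; ring
    have h1 := le_S _ hx
    have h2 := S_le _ hx0.le
    have hS : 0 < ∑' j : ℕ, (r * T * q) ^ j / gHalf j ^ 2 := lt_of_lt_of_le (by positivity) h1
    refine ⟨Real.log (∑' j : ℕ, (r * T * q) ^ j / gHalf j ^ 2), ?_, ?_, ?_⟩
    · have e : occScalingW (r * T * q)
          = 1 / (r * T * q) * ∑' j : ℕ, (r * T * q) ^ j / gHalf j ^ 2 := rfl
      rw [e, Real.log_mul (by positivity) (by positivity), Real.log_mul (by positivity)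
        (by positivity), Real.log_mul (by positivity) hS.ne', Real.log_exp,
        Real.log_div hr.ne' hT.ne', one_div (r * T * q), Real.log_inv, lx]
      ring
    · have := Real.log_le_log (by positivity) h1
      rwa [Real.log_div (by positivity) hp.ne', Real.log_exp] at this
    · have h3 : ∑' j : ℕ, (r * T * q) ^ j / gHalf j ^ 2
          ≤ (3 * (r * T * q)) * Real.exp (2 * (r * T * q)) / √π := by
        refine h2.trans ?_
        gcongr
        linarith
      have := Real.log_le_log hS h3
      rwa [Real.log_div (by positivity) hp.ne', Real.log_mul (by positivity) (by positivity),
        Real.log_exp, Real.log_mul (by norm_num) hx0.ne', lx] at this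
  refine tendsto_of_tendsto_of_tendsto_of_le_of_le' hl hu ?_ ?_
  · filter_upwards [key] with T ⟨hT, hx⟩
    obtain ⟨L, e, h1, h2⟩ := main T hT hx
    rw [e]
    have := mul_le_mul_of_nonneg_left h1 (one_div_pos.mpr hT).le
    refine le_trans (le_of_eq ?_) (mul_le_mul_of_nonneg_left
      (add_le_add_right h1 _) (one_div_pos.mpr hT).le)
    field_simp
    ring
  · filter_upwards [key] with T ⟨hT, hx⟩
    obtain ⟨L, e, h1, h2⟩ := main T hT hx
    rw [e]
    refine le_trans (mul_le_mul_of_nonneg_left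
      (add_le_add_right h2 _) (one_div_pos.mpr hT).le) (le_of_eq ?_)
    field_simp
    ring
end

section
/- Fix r > 0 and define λ_r : ℝ → ℝ by λ_r(k) = (1/2)(k − 2r + √(k² + 4r²)). Then for every a ∈ [0,1], the Legendre transform of λ_r at a satisfies sup_{k ∈ ℝ} [ k·a − λ_r(k) ] = r(1 − 2√(a(1−a))). -/
open Real

/-- The scaled cumulant generating function of the positive occupation time of
reset Brownian motion with reset rate `r`: `λ_r(k) = (1/2)(k - 2r + √(k² + 4r²))`. -/
noncomputable def lambdaOcc (r k : ℝ) : ℝ :=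
  (1 / 2) * (k - 2 * r + Real.sqrt (k ^ 2 + 4 * r ^ 2))

/-- **Legendre transform of the occupation-time SCGF**: for `r > 0` and `a ∈ [0,1]`,
`sup_k [k·a - λ_r(k)] = r(1 - 2√(a(1-a)))`, the large deviation rate function of the
occupation-time fraction of reset Brownian motion. -/
theorem legendre_lambdaOcc (r a : ℝ) (hr : 0 < r) (ha0 : 0 ≤ a) (ha1 : a ≤ 1) :
    (⨆ k : ℝ, (k * a - lambdaOcc r k)) = r * (1 - 2 * Real.sqrt (a * (1 - a))) := by
  obtain ⟨s, hs⟩ : ∃ s, s = Real.sqrt (a * (1 - a)) := ⟨_, rfl⟩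
  have hs0 : 0 ≤ s := hs ▸ Real.sqrt_nonneg _
  have hs2 : s ^ 2 = a * (1 - a) := by
    rw [hs]
    exact Real.sq_sqrt (mul_nonneg ha0 (by linarith))
  rw [← hs]
  apply ciSup_eq_of_forall_le_of_forall_lt_exists_gt
  · intro k
    have h : k * (2 * a - 1) + 4 * r * s ≤ Real.sqrt (k ^ 2 + 4 * r ^ 2) := by
      apply Real.le_sqrt_of_sq_le
      have h1 : k ^ 2 + 4 * r ^ 2 - (k * (2 * a - 1) + 4 * r * s) ^ 2
          = (2 * k * s - 2 * r * (2 * a - 1)) ^ 2 := by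
        linear_combination (-16 * r ^ 2 - 4 * k ^ 2) * hs2
      nlinarith [sq_nonneg (2 * k * s - 2 * r * (2 * a - 1))]
    unfold lambdaOcc
    linarith
  · intro w hw
    rcases hs0.lt_or_eq with hpos | hzero
    · refine ⟨r * (2 * a - 1) / s, ?_⟩
      have h : Real.sqrt ((r * (2 * a - 1) / s) ^ 2 + 4 * r ^ 2) = r / s := by
        rw [Real.sqrt_eq_iff_mul_self_eq (by positivity) (by positivity)]
        field_simp
        linear_combination 4 * hs2
      have h2 : r / s - r * (2 * a - 1) / s * (2 * a - 1) = 4 * r * s := by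
        field_simp
        linear_combination (-4) * hs2
      unfold lambdaOcc
      rw [h]
      linarith
    · rw [← hzero] at hw hs2
      have he : 0 < r - w := by linarith
      obtain ⟨t, ht⟩ : ∃ t, t = 2 * r ^ 2 / (r - w) := ⟨_, rfl⟩
      have ht0 : 0 < t := by rw [ht]; positivity
      have hte : t * (r - w) = 2 * r ^ 2 := by
        rw [ht]; field_simp
      have h : Real.sqrt (t ^ 2 + 4 * r ^ 2) < t + 2 * (r - w) := by
        rw [Real.sqrt_lt' (by positivity)]
        nlinarith [sq_nonneg r, mul_pos he he, pow_pos hr 2]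
      have hc : a = 0 ∨ a = 1 := by
        rcases mul_eq_zero.mp (show a * (1 - a) = 0 by linarith) with h | h
        · exact Or.inl h
        · exact Or.inr (by linarith)
      unfold lambdaOcc
      rcases hc with h0 | h0
      · refine ⟨-t, ?_⟩
        rw [h0, neg_sq]
        linarith
      · refine ⟨t, ?_⟩
        rw [h0]
        linarith
end

section
/- For all r > 0 and s > 0, ∫₀^∞ e^{−sT} · (1/r⁶)·( 12(rT)² + 120 rT − 840 + e^{−rT}[ 9(rT)⁴ + 68(rT)³ + 288(rT)² + 720 rT + 840 ] ) dT = 24·(r + 10s) / ( s³ (r+s)⁵ ). -/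
open MeasureTheory Set Real

lemma aux_integrable (n : ℕ) (b : ℝ) (hb : 0 < b) :
    Integrable (fun x : ℝ => x ^ n * Real.exp (-b * x)) (volume.restrict (Ioi 0)) := by
  have h := integrableOn_rpow_mul_exp_neg_mul_rpow (p := 1) (s := n) (b := b)
    (by have : (0:ℝ) ≤ n := n.cast_nonneg
        linarith) one_pos hb
  simpa [IntegrableOn] using h

lemma aux_integral (n : ℕ) (b : ℝ) (hb : 0 < b) :
    ∫ x in Ioi (0:ℝ), x ^ n * Real.exp (-b * x) = n.factorial / b ^ (n + 1) := by
  have h := Real.integral_rpow_mul_exp_neg_mul_Ioi (a := (n:ℝ) + 1) (r := b)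
    (by positivity) hb
  rw [Real.Gamma_nat_eq_factorial] at h
  have e : (1 / b) ^ ((n:ℝ) + 1) = 1 / b ^ (n + 1) := by
    rw [← one_div_pow, ← Real.rpow_natCast]
    push_cast
    rfl
  rw [e] at h
  simp only [add_sub_cancel_right, Real.rpow_natCast] at h
  simp only [neg_mul]
  rw [h]
  ring

theorem laplace_area_fourth_moment (r s : ℝ) (hr : 0 < r) (hs : 0 < s) :
    (∫ T in Ioi (0:ℝ), Real.exp (-s * T) *
        ((1 / r ^ 6) * (12 * (r * T) ^ 2 + 120 * (r * T) - 840
          + Real.exp (-r * T) * (9 * (r * T) ^ 4 + 68 * (r * T) ^ 3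
              + 288 * (r * T) ^ 2 + 720 * (r * T) + 840))))
      = 24 * (r + 10 * s) / (s ^ 3 * (r + s) ^ 5) := by
  have hu : 0 < r + s := by positivity
  have I := fun (n : ℕ) (c : ℝ) => (aux_integrable n s hs).const_mul c
  have J := fun (n : ℕ) (c : ℝ) => (aux_integrable n (r + s) hu).const_mul c
  have key : ∀ T : ℝ, Real.exp (-s * T) *
        ((1 / r ^ 6) * (12 * (r * T) ^ 2 + 120 * (r * T) - 840
          + Real.exp (-r * T) * (9 * (r * T) ^ 4 + 68 * (r * T) ^ 3
              + 288 * (r * T) ^ 2 + 720 * (r * T) + 840)))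
      = 12 * r ^ 2 / r ^ 6 * (T ^ 2 * Real.exp (-s * T))
        + (120 * r / r ^ 6 * (T ^ 1 * Real.exp (-s * T))
        + (-840 / r ^ 6 * (T ^ 0 * Real.exp (-s * T))
        + (9 * r ^ 4 / r ^ 6 * (T ^ 4 * Real.exp (-(r + s) * T))
        + (68 * r ^ 3 / r ^ 6 * (T ^ 3 * Real.exp (-(r + s) * T))
        + (288 * r ^ 2 / r ^ 6 * (T ^ 2 * Real.exp (-(r + s) * T))
        + (720 * r / r ^ 6 * (T ^ 1 * Real.exp (-(r + s) * T))
        + 840 / r ^ 6 * (T ^ 0 * Real.exp (-(r + s) * T)))))))) := by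
    intro T
    have : Real.exp (-(r + s) * T) = Real.exp (-s * T) * Real.exp (-r * T) := by
      rw [← Real.exp_add]
      congr 1
      ring
    rw [this]
    ring
  simp_rw [key]
  have K1 := (J 1 (720 * r / r ^ 6)).fun_add (J 0 (840 / r ^ 6))
  have K2 := (J 2 (288 * r ^ 2 / r ^ 6)).fun_add K1
  have K3 := (J 3 (68 * r ^ 3 / r ^ 6)).fun_add K2
  have K4 := (J 4 (9 * r ^ 4 / r ^ 6)).fun_add K3
  have K5 := (I 0 (-840 / r ^ 6)).fun_add K4
  have K6 := (I 1 (120 * r / r ^ 6)).fun_add K5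
  rw [integral_add (I 2 _) K6, integral_add (I 1 _) K5, integral_add (I 0 _) K4,
    integral_add (J 4 _) K3, integral_add (J 3 _) K2, integral_add (J 2 _) K1,
    integral_add (J 1 _) (J 0 _)]
  simp only [integral_const_mul, aux_integral _ s hs, aux_integral _ (r + s) hu]
  simp only [Nat.factorial]
  push_cast
  have := hr.ne'
  have := hs.ne'
  have := hu.ne'
  field_simp
  ring
end

section
/- Let (Ω, ℱ, P) be a probability space, let C ∈ (0,∞), let T > 0, and let h : [0,∞) × Ω → [0,∞) be jointly measurable with E[h_t] < ∞ and E[h_t²] ≤ C·(E[h_t])² for every t ≥ 0. Then E[ ( ∫₀^T h_t dt )² ] ≤ C · ( E[ ∫₀^T h_t dt ] )². -/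
open MeasureTheory Set ENNReal

/-- **Second-moment domination passes to time integrals** (key estimate (33) in the proof
of the zero-one law, Lemma 1): if a jointly measurable nonnegative process `h` on
`[0,∞) × Ω` has finite means and satisfies `E[h_t²] ≤ C (E[h_t])²` for every `t ≥ 0`,
then the time-integrated process `F_T = ∫₀^T h_t dt` satisfies
`E[F_T²] ≤ C (E[F_T])²`. All integrals are Lebesgue integrals of nonnegative functions. -/
theorem second_moment_domination_time_integral
    {Ω : Type*} [MeasurableSpace Ω] (P : Measure Ω) [IsProbabilityMeasure P]
    (C : ℝ) (hC : 0 < C) (T : ℝ) (hT : 0 < T)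
    (h : ℝ → Ω → ℝ) (hmeas : Measurable (Function.uncurry h))
    (hnn : ∀ t, 0 ≤ t → ∀ ω, 0 ≤ h t ω)
    (hfin : ∀ t, 0 ≤ t → (∫⁻ ω, ENNReal.ofReal (h t ω) ∂P) < ⊤)
    (hdom : ∀ t, 0 ≤ t →
      (∫⁻ ω, ENNReal.ofReal ((h t ω) ^ 2) ∂P)
        ≤ ENNReal.ofReal C * (∫⁻ ω, ENNReal.ofReal (h t ω) ∂P) ^ 2) :
    (∫⁻ ω, (∫⁻ t in Ioc (0:ℝ) T, ENNReal.ofReal (h t ω)) ^ 2 ∂P)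
      ≤ ENNReal.ofReal C * (∫⁻ ω, (∫⁻ t in Ioc (0:ℝ) T, ENNReal.ofReal (h t ω)) ∂P) ^ 2 := by
  have hg : Measurable (fun p : ℝ × Ω => ENNReal.ofReal (h p.1 p.2)) :=
    ENNReal.measurable_ofReal.comp hmeas
  obtain ⟨g, hgdef⟩ : ∃ g : ℝ → Ω → ℝ≥0∞, g = fun t ω => ENNReal.ofReal (h t ω) := ⟨_, rfl⟩
  have hg' : Measurable (Function.uncurry g) := by subst hgdef; exact hg
  have hgt : ∀ t, Measurable (g t) := fun t => hg'.comp measurable_prodMk_left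
  have hgω : ∀ ω, Measurable (fun t => g t ω) := fun ω => hg'.comp measurable_prodMk_right
  have hd : ∀ t, 0 ≤ t → (∫⁻ ω, g t ω ^ 2 ∂P) ≤ ENNReal.ofReal C * (∫⁻ ω, g t ω ∂P) ^ 2 := by
    intro t ht
    have := hdom t ht
    subst hgdef
    simpa only [ENNReal.ofReal_pow (hnn t ht _)] using this
  have key : (∫⁻ ω, (∫⁻ t in Ioc (0:ℝ) T, g t ω) ^ 2 ∂P)
      ≤ ENNReal.ofReal C * (∫⁻ ω, (∫⁻ t in Ioc (0:ℝ) T, g t ω) ∂P) ^ 2 := by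
    have hsw : (∫⁻ ω, (∫⁻ t in Ioc (0:ℝ) T, g t ω) ∂P)
        = ∫⁻ t in Ioc (0:ℝ) T, (∫⁻ ω, g t ω ∂P) :=
      lintegral_lintegral_swap (hg'.comp measurable_swap).aemeasurable
    have hF : Measurable (fun ω => ∫⁻ t in Ioc (0:ℝ) T, g t ω) :=
      (hg'.comp measurable_swap).lintegral_prod_right'
    have hm : Measurable (fun t => ∫⁻ ω, g t ω ∂P) := hg'.lintegral_prod_right'
    have cs : ∀ s, 0 ≤ s → ∀ t, 0 ≤ t → (∫⁻ ω, g s ω * g t ω ∂P)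
        ≤ ENNReal.ofReal C * ((∫⁻ ω, g s ω ∂P) * (∫⁻ ω, g t ω ∂P)) := by
      intro s hs t ht
      have h1 := ENNReal.lintegral_mul_le_Lp_mul_Lq P Real.HolderConjugate.two_two
        (hgt s).aemeasurable (hgt t).aemeasurable
      simp only [Pi.mul_apply, ENNReal.rpow_two] at h1
      refine h1.trans ?_
      have h2 : ((∫⁻ ω, g s ω ^ 2 ∂P) ^ (1 / 2 : ℝ)) * ((∫⁻ ω, g t ω ^ 2 ∂P) ^ (1 / 2 : ℝ)) ≤
          ((ENNReal.ofReal C * (∫⁻ ω, g s ω ∂P) ^ 2) ^ (1 / 2 : ℝ)) *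
          ((ENNReal.ofReal C * (∫⁻ ω, g t ω ∂P) ^ 2) ^ (1 / 2 : ℝ)) := by
        gcongr
        · exact hd s hs
        · exact hd t ht
      refine h2.trans (le_of_eq ?_)
      rw [← ENNReal.mul_rpow_of_nonneg _ _ (by norm_num)]
      have h3 : ∀ a b c : ℝ≥0∞, a * b ^ 2 * (a * c ^ 2) = (a * (b * c)) ^ (2 : ℝ) := by
        intro a b c
        rw [ENNReal.rpow_two]; ring
      rw [h3, ← ENNReal.rpow_mul]
      norm_num
    calc (∫⁻ ω, (∫⁻ t in Ioc (0:ℝ) T, g t ω) ^ 2 ∂P)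
        = ∫⁻ ω, (∫⁻ s in Ioc (0:ℝ) T, g s ω * ∫⁻ t in Ioc (0:ℝ) T, g t ω) ∂P := by
          refine lintegral_congr fun ω => ?_
          rw [lintegral_mul_const _ (hgω ω), sq]
      _ = ∫⁻ s in Ioc (0:ℝ) T, ∫⁻ ω, (g s ω * ∫⁻ t in Ioc (0:ℝ) T, g t ω) ∂P := by
          refine lintegral_lintegral_swap (Measurable.aemeasurable ?_)
          exact (hg'.comp measurable_swap).mul (hF.comp measurable_fst)
      _ = ∫⁻ s in Ioc (0:ℝ) T, ∫⁻ t in Ioc (0:ℝ) T, ∫⁻ ω, g s ω * g t ω ∂P := by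
          refine lintegral_congr fun s => ?_
          rw [← lintegral_lintegral_swap (μ := P) (f := fun ω t => g s ω * g t ω)]
          · refine lintegral_congr fun ω => ?_
            rw [lintegral_const_mul _ (hgω ω)]
          · exact (((hgt s).comp measurable_fst).mul (hg'.comp measurable_swap)).aemeasurable
      _ ≤ ∫⁻ s in Ioc (0:ℝ) T, ∫⁻ t in Ioc (0:ℝ) T,
            ENNReal.ofReal C * ((∫⁻ ω, g s ω ∂P) * (∫⁻ ω, g t ω ∂P)) := by
          refine setLIntegral_mono' measurableSet_Ioc fun s hs => ?_
          exact setLIntegral_mono' measurableSet_Ioc fun t ht => cs s hs.1.le t ht.1.le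
      _ = ENNReal.ofReal C * (∫⁻ ω, (∫⁻ t in Ioc (0:ℝ) T, g t ω) ∂P) ^ 2 := by
          rw [hsw, sq, ← lintegral_mul_const _ hm, ← lintegral_const_mul _ (hm.mul_const _)]
          refine lintegral_congr fun s => ?_
          rw [lintegral_const_mul _ (hm.const_mul _), lintegral_const_mul _ hm]
  subst hgdef
  exact key
end

section
/- Define f₁ : (0,∞) → ℝ by f₁(ρ) = (1/√(2π))·[ e^{−ρ}/ρ + (√π / (2ρ^{3/2}))·(2ρ − 1)·erf(√ρ) ], where erf(x) = (2/√π)∫₀^x e^{−t²} dt is the error function. Then for all r > 0 and s > 0, ∫₀^∞ e^{−sT} · T^{3/2} · f₁(rT) dT = 1 / ( √2 · s² · √(s+r) ). -/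
open MeasureTheory Set Real

/-- The error function `erf(x) = (2/√π) ∫₀^x e^{-t²} dt`. -/
noncomputable def errorFun (x : ℝ) : ℝ :=
  (2 / Real.sqrt π) * ∫ t in (0:ℝ)..x, Real.exp (-t ^ 2)

/-- The function `f₁` giving the mean of the absolute area of reset Brownian motion via
`E_r[C_T] = T^{3/2} f₁(rT)` (Theorem 7). -/
noncomputable def absAreaF1 (ρ : ℝ) : ℝ :=
  (1 / Real.sqrt (2 * π)) *
    (Real.exp (-ρ) / ρ + (Real.sqrt π / (2 * ρ ^ ((3:ℝ)/2))) * (2 * ρ - 1) * errorFun (Real.sqrt ρ))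

noncomputable def eAux (x : ℝ) : ℝ := ∫ t in (0:ℝ)..x, Real.exp (-t ^ 2)

lemma eAux_hasDerivAt (x : ℝ) : HasDerivAt eAux (Real.exp (-x ^ 2)) x := by
  have hc : Continuous (fun t : ℝ => Real.exp (-t ^ 2)) := by fun_prop
  exact intervalIntegral.integral_hasDerivAt_right (hc.intervalIntegrable _ _)
    (hc.stronglyMeasurableAtFilter _ _) hc.continuousAt

lemma eAux_cont : Continuous eAux :=
  continuous_iff_continuousAt.2 fun x => (eAux_hasDerivAt x).continuousAt

lemma gaussAux_int : Integrable (fun t : ℝ => Real.exp (-t ^ 2)) := by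
  simpa using integrable_exp_neg_mul_sq (b := 1) one_pos

lemma eAux_tendsto : Filter.Tendsto eAux Filter.atTop (nhds (Real.sqrt π / 2)) := by
  have h := intervalIntegral_tendsto_integral_Ioi (0:ℝ) gaussAux_int.integrableOn Filter.tendsto_id
  have h2 := integral_gaussian_Ioi 1
  simp only [neg_mul, one_mul, div_one] at h2
  rw [h2] at h
  exact h

lemma eAux_mono : Monotone eAux :=
  monotone_of_hasDerivAt_nonneg (f' := fun x => Real.exp (-x ^ 2)) eAux_hasDerivAt
    (fun x => (Real.exp_pos _).le)

lemma eAux_zero : eAux 0 = 0 := by simp [eAux]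

lemma eAux_bound (x : ℝ) (hx : 0 ≤ x) : ‖eAux x‖ ≤ Real.sqrt π / 2 := by
  have h0 : 0 ≤ eAux x := by rw [← eAux_zero]; exact eAux_mono hx
  rw [Real.norm_of_nonneg h0]
  exact eAux_mono.ge_of_tendsto eAux_tendsto x

lemma eAux_sqrt_deriv (c T : ℝ) (hc : 0 < c) (hT : 0 < T) :
    HasDerivAt (fun T => eAux (Real.sqrt (c * T)))
      (Real.exp (-(c * T)) * (Real.sqrt c / (2 * Real.sqrt T))) T := by
  have h1 : HasDerivAt (fun T : ℝ => c * T) c T := by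
    simpa using (hasDerivAt_id T).const_mul c
  have hcT : 0 < c * T := mul_pos hc hT
  have h2 := (eAux_hasDerivAt (Real.sqrt (c * T))).comp T (h1.sqrt hcT.ne')
  refine h2.congr_deriv ?_
  rw [Real.sq_sqrt hcT.le, Real.sqrt_mul hc.le]
  have := Real.sq_sqrt hc.le
  have h3 := (Real.sqrt_pos.2 hc).ne'
  have h4 := (Real.sqrt_pos.2 hT).ne'
  congr 1
  field_simp
  linarith

lemma eAux_sqrt_tendsto (c : ℝ) (hc : 0 < c) :
    Filter.Tendsto (fun T => eAux (Real.sqrt (c * T))) Filter.atTop (nhds (Real.sqrt π / 2)) :=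
  eAux_tendsto.comp (Real.tendsto_sqrt_atTop.comp (Filter.tendsto_id.const_mul_atTop hc))

lemma pow_exp_int (a b : ℝ) (ha : -1 < a) (hb : 0 < b) :
    IntegrableOn (fun T : ℝ => T ^ a * Real.exp (-(b * T))) (Ioi 0) := by
  have h := integrableOn_rpow_mul_exp_neg_mul_rpow (s := a) (p := 1) (b := b) ha zero_lt_one hb
  simpa using h

lemma integrand_eq (r s T : ℝ) (hr : 0 < r) (hT : 0 < T) :
    Real.exp (-s * T) * T ^ ((3:ℝ)/2) * absAreaF1 (r * T) =
      (1 / Real.sqrt (2 * π)) * (Real.sqrt T * Real.exp (-((s + r) * T)) / r +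
        (2 * r * T - 1) / (r * Real.sqrt r) * Real.exp (-(s * T)) * eAux (Real.sqrt (r * T))) := by
  have hp : ∀ x : ℝ, 0 < x → x ^ ((3:ℝ)/2) = x * Real.sqrt x := by
    intro x hx
    rw [show (3:ℝ)/2 = 1 + 1/2 by norm_num, Real.rpow_add hx, Real.rpow_one, Real.sqrt_eq_rpow]
  unfold absAreaF1 errorFun
  change _ * (1 / _ * (_ + _ * _ * (2 / √π * eAux (√(r * T))))) = _
  rw [hp T hT, hp (r * T) (mul_pos hr hT),
    show -((s + r) * T) = -s * T + -(r * T) by ring, Real.exp_add,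
    show -(s * T) = -s * T by ring]
  generalize eAux (√(r * T)) = E
  rw [Real.sqrt_mul hr.le]
  have h3 := (Real.sqrt_pos.2 hr).ne'
  have h4 := (Real.sqrt_pos.2 hT).ne'
  have h5 := (Real.sqrt_pos.2 Real.pi_pos).ne'
  have h6 : √(2 * π) ≠ 0 := by positivity
  field_simp

lemma F_deriv (r s T : ℝ) (hr : 0 < r) (hs : 0 < s) (hT : 0 < T) :
    HasDerivAt (fun T => -1 / (r * s) * (Real.sqrt T * Real.exp (-((s + r) * T))) +
        (-2 / (s * Real.sqrt r) * T + (-2 / (s * Real.sqrt r) + 1 / (r * Real.sqrt r)) / s)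
          * Real.exp (-(s * T)) * eAux (Real.sqrt (r * T))
        + 2 / (s ^ 2 * Real.sqrt (s + r)) * eAux (Real.sqrt ((s + r) * T)))
      (Real.sqrt T * Real.exp (-((s + r) * T)) / r +
        (2 * r * T - 1) / (r * Real.sqrt r) * Real.exp (-(s * T)) * eAux (Real.sqrt (r * T))) T := by
  have hsr : 0 < s + r := by positivity
  have hexp : ∀ c : ℝ, HasDerivAt (fun T : ℝ => Real.exp (-(c * T))) (Real.exp (-(c * T)) * (-c)) T := by
    intro c
    have : HasDerivAt (fun T : ℝ => -(c * T)) (-c) T := by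
      have h0 : HasDerivAt (fun T : ℝ => c * T) c T := by
        simpa using (hasDerivAt_id T).const_mul c
      exact h0.neg
    exact this.exp
  have h1 := ((Real.hasDerivAt_sqrt hT.ne').mul (hexp (s + r))).const_mul (-1 / (r * s))
  have h2 := ((((hasDerivAt_id T).const_mul (-2 / (s * Real.sqrt r))).add_const
    ((-2 / (s * Real.sqrt r) + 1 / (r * Real.sqrt r)) / s)).mul (hexp s)).mul
      (eAux_sqrt_deriv r T hr hT)
  have h3 := (eAux_sqrt_deriv (s + r) T hsr hT).const_mul (2 / (s ^ 2 * Real.sqrt (s + r)))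
  refine ((h1.add h2).add h3).congr_deriv ?_
  simp only [id, Pi.mul_apply]
  rw [show -((s + r) * T) = -(s * T) + -(r * T) by ring, Real.exp_add]
  generalize eAux (√(r * T)) = E
  have h3 := (Real.sqrt_pos.2 hr).ne'
  have h4 := (Real.sqrt_pos.2 hT).ne'
  have h5 := (Real.sqrt_pos.2 hsr).ne'
  obtain ⟨u, hu⟩ : ∃ u, u = √T := ⟨_, rfl⟩
  have hTu : T = u ^ 2 := by rw [hu, Real.sq_sqrt hT.le]
  obtain ⟨q, hq⟩ : ∃ q, q = √r := ⟨_, rfl⟩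
  have hrq : r = q ^ 2 := by rw [hq, Real.sq_sqrt hr.le]
  generalize Real.exp (-(s * T)) = X
  generalize Real.exp (-(r * T)) = Y
  rw [← hu, ← hq]
  rw [← hu] at h4
  rw [← hq] at h3
  generalize √(s + r) = w at *
  clear hu hq
  subst hTu hrq
  field_simp
  ring

/-- **Laplace transform of the mean of the absolute area of reset Brownian motion**:
for `r, s > 0`, `∫₀^∞ e^{-sT} T^{3/2} f₁(rT) dT = 1/(√2 s² √(s+r))`. -/
theorem laplace_absArea_mean (r s : ℝ) (hr : 0 < r) (hs : 0 < s) :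
    (∫ T in Ioi (0:ℝ), Real.exp (-s * T) * T ^ ((3:ℝ)/2) * absAreaF1 (r * T))
      = 1 / (Real.sqrt 2 * s ^ 2 * Real.sqrt (s + r)) := by
  have hsr : 0 < s + r := by positivity
  rw [setIntegral_congr_fun measurableSet_Ioi (fun T hT => integrand_eq r s T hr hT),
    integral_const_mul]
  have hi1 := pow_exp_int (1/2) (s + r) (by norm_num) hsr
  have hi2 := pow_exp_int 1 s (by norm_num) hs
  have hi3 := pow_exp_int 0 s (by norm_num) hs
  simp only [Real.rpow_one, Real.rpow_zero, one_mul, ← Real.sqrt_eq_rpow] at hi1 hi2 hi3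
  have hE : Continuous (fun T => eAux (Real.sqrt (r * T))) :=
    eAux_cont.comp (by fun_prop)
  have hint : IntegrableOn (fun T => Real.sqrt T * Real.exp (-((s + r) * T)) / r +
        (2 * r * T - 1) / (r * Real.sqrt r) * Real.exp (-(s * T)) * eAux (Real.sqrt (r * T)))
        (Ioi 0) := by
    refine (hi1.div_const r).add ?_
    have h : IntegrableOn (fun T => (2 * r * T - 1) / (r * Real.sqrt r) * Real.exp (-(s * T)))
        (Ioi 0) := by
      refine ((hi2.const_mul (2 * r / (r * Real.sqrt r))).sub
        (hi3.const_mul (1 / (r * Real.sqrt r)))).congr (Filter.Eventually.of_forall fun T => ?_)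
      simp only [Pi.sub_apply]
      ring
    refine Integrable.mul_bdd (c := Real.sqrt π / 2) h hE.aestronglyMeasurable
      (Filter.Eventually.of_forall fun T => eAux_bound _ (Real.sqrt_nonneg _))
  have hlim1 : ∀ (a b : ℝ), 0 < b → Filter.Tendsto (fun T : ℝ => T ^ a * Real.exp (-(b * T)))
      Filter.atTop (nhds 0) := by
    intro a b hb
    simpa using tendsto_rpow_mul_exp_neg_mul_atTop_nhds_zero a b hb
  have l1 := hlim1 (1/2) (s + r) hsr
  have l2 := hlim1 1 s hs
  have l3 := hlim1 0 s hs
  simp only [Real.rpow_one, Real.rpow_zero, one_mul, ← Real.sqrt_eq_rpow] at l1 l2 l3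
  have key := integral_Ioi_of_hasDerivAt_of_tendsto (a := 0)
    (m := 2 / (s ^ 2 * Real.sqrt (s + r)) * (Real.sqrt π / 2)) ?_
    (fun T hT => F_deriv r s T hr hs hT) hint ?_
  · rw [key, Real.sqrt_mul zero_le_two]
    simp only [mul_zero, Real.sqrt_zero, eAux_zero]
    have h5 := (Real.sqrt_pos.2 Real.pi_pos).ne'
    have h6 := (Real.sqrt_pos.2 hsr).ne'
    field_simp
    simp
  · have hE2 : Continuous (fun T => eAux (Real.sqrt ((s + r) * T))) :=
      eAux_cont.comp (by fun_prop)
    exact Continuous.continuousWithinAt (by fun_prop)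
  · have t2 := ((l2.const_mul (-2 / (s * Real.sqrt r))).add
      (l3.const_mul ((-2 / (s * Real.sqrt r) + 1 / (r * Real.sqrt r)) / s))).mul
        (eAux_sqrt_tendsto r hr)
    have t := ((l1.const_mul (-1 / (r * s))).add t2).add
      ((eAux_sqrt_tendsto (s + r) hsr).const_mul (2 / (s ^ 2 * Real.sqrt (s + r))))
    simp only [mul_zero, zero_mul, zero_add, add_zero] at t
    refine t.congr fun T => ?_
    ring
end

section
/- Define f₂ : (0,∞) → ℝ by f₂(ρ) = (1/(8πρ³))·[ 2π·( 2ρ² + ρ − 6 + (5ρ + 6)e^{−ρ} ) − ( 2√ρ·e^{−ρ} + √π·(2ρ − 1)·erf(√ρ) )² ], where erf(x) = (2/√π)∫₀^x e^{−t²} dt is the error function. Then lim_{ρ→∞} ρ² · f₂(ρ) = 3/4. -/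
open MeasureTheory Set Real Filter

/-- The function `f₂` giving the variance of the absolute area of reset Brownian motion
via `Var_r[C_T] = T³ f₂(rT)` (Theorem 7). -/
noncomputable def absAreaF2 (ρ : ℝ) : ℝ :=
  (1 / (8 * π * ρ ^ 3)) *
    (2 * π * (2 * ρ ^ 2 + ρ - 6 + (5 * ρ + 6) * Real.exp (-ρ))
      - (2 * Real.sqrt ρ * Real.exp (-ρ)
          + Real.sqrt π * (2 * ρ - 1) * errorFun (Real.sqrt ρ)) ^ 2)

theorem errorFun_tail {x : ℝ} (hx : 1 ≤ x) :
    0 ≤ 1 - errorFun x ∧ 1 - errorFun x ≤ (2 / Real.sqrt π) * Real.exp (-x) := by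
  have hs : 0 < Real.sqrt π := Real.sqrt_pos.2 Real.pi_pos
  have hint : Integrable (fun t : ℝ => Real.exp (-t ^ 2)) := by
    simpa using integrable_exp_neg_mul_sq (b := 1) one_pos
  have h0 : ∫ t in Ioi (0:ℝ), Real.exp (-t ^ 2) = Real.sqrt π / 2 := by
    simpa using integral_gaussian_Ioi 1
  have hsplit : (∫ t in (0:ℝ)..x, Real.exp (-t ^ 2)) + ∫ t in Ioi x, Real.exp (-t ^ 2)
      = Real.sqrt π / 2 := by
    rw [← h0]
    exact intervalIntegral.integral_interval_add_Ioi hint.integrableOn hint.integrableOn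
  have hn : 0 ≤ ∫ t in Ioi x, Real.exp (-t ^ 2) :=
    integral_nonneg (fun t => (Real.exp_pos _).le)
  have hle : ∫ t in Ioi x, Real.exp (-t ^ 2) ≤ Real.exp (-x) := by
    rw [← integral_exp_neg_Ioi x]
    refine setIntegral_mono_on hint.integrableOn (integrableOn_exp_neg_Ioi x)
      measurableSet_Ioi ?_
    intro t ht
    have ht' : x < t := ht
    apply Real.exp_le_exp.2
    nlinarith
  have he : 1 - errorFun x = (2 / Real.sqrt π) * ∫ t in Ioi x, Real.exp (-t ^ 2) := by
    unfold errorFun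
    rw [← eq_sub_iff_add_eq'] at hsplit
    rw [hsplit]
    field_simp
  rw [he]
  exact ⟨by positivity, by gcongr⟩

theorem poly_tail_tendsto : Tendsto (fun ρ : ℝ => (2 * ρ - 1) * (1 - errorFun (Real.sqrt ρ)))
    atTop (nhds 0) := by
  have h2 : Tendsto (fun ρ : ℝ => 2 * (2 / Real.sqrt π) *
      ((Real.sqrt ρ) ^ 2 * Real.exp (-Real.sqrt ρ))) atTop (nhds 0) := by
    have := ((tendsto_pow_mul_exp_neg_atTop_nhds_zero 2).comp Real.tendsto_sqrt_atTop).const_mul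
      (2 * (2 / Real.sqrt π))
    simpa [Function.comp_def] using this
  refine squeeze_zero' ?_ ?_ h2
  · filter_upwards [eventually_ge_atTop (1:ℝ)] with ρ hρ
    have := (errorFun_tail (Real.one_le_sqrt.2 hρ)).1
    exact mul_nonneg (by linarith) this
  · filter_upwards [eventually_ge_atTop (1:ℝ)] with ρ hρ
    obtain ⟨h, h'⟩ := errorFun_tail (Real.one_le_sqrt.2 hρ)
    rw [Real.sq_sqrt (by linarith)]
    calc (2 * ρ - 1) * (1 - errorFun (Real.sqrt ρ))
        ≤ (2 * ρ) * ((2 / Real.sqrt π) * Real.exp (-Real.sqrt ρ)) := by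
          apply mul_le_mul _ h' h <;> linarith
      _ = _ := by ring

/-- **Asymptotics of the variance of the absolute area**: `ρ² f₂(ρ) → 3/4` as `ρ → ∞`,
i.e. `f₂(ρ) ~ 3/(4ρ²)`; hence `lim_{T→∞} T⁻¹ Var_r[C_T] = 3/(4r²)`. -/
theorem absAreaF2_asymptotics :
    Tendsto (fun ρ : ℝ => ρ ^ 2 * absAreaF2 ρ) atTop (nhds (3 / 4)) := by
  have hE : Tendsto (fun ρ : ℝ => Real.exp (-ρ)) atTop (nhds 0) :=
    Real.tendsto_exp_neg_atTop_nhds_zero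
  have hI : Tendsto (fun ρ : ℝ => ρ⁻¹) atTop (nhds 0) := tendsto_inv_atTop_zero
  have hA : Tendsto (fun ρ : ℝ => 2 * Real.sqrt ρ * Real.exp (-ρ)) atTop (nhds 0) := by
    have h1 : Tendsto (fun ρ : ℝ => 2 * (ρ * Real.exp (-ρ))) atTop (nhds 0) := by
      simpa using (tendsto_pow_mul_exp_neg_atTop_nhds_zero 1).const_mul 2
    refine squeeze_zero' (Eventually.of_forall fun ρ => by positivity) ?_ h1
    filter_upwards [eventually_ge_atTop (1:ℝ)] with ρ hρ
    have : Real.sqrt ρ ≤ ρ := Real.sqrt_le_iff.2 ⟨by linarith, by nlinarith⟩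
    rw [← mul_assoc]
    gcongr
  have hD := hA.sub (poly_tail_tendsto.const_mul (Real.sqrt π))
  simp only [mul_zero, sub_zero] at hD
  set d : ℝ → ℝ := fun ρ => 2 * Real.sqrt ρ * Real.exp (-ρ) -
    Real.sqrt π * ((2 * ρ - 1) * (1 - errorFun (Real.sqrt ρ))) with hd
  have hlim : Tendsto (fun ρ : ℝ => 1 / (8 * π) * (6 * π - 13 * π * ρ⁻¹
      + 2 * π * (5 + 6 * ρ⁻¹) * Real.exp (-ρ) - 2 * Real.sqrt π * (2 - ρ⁻¹) * d ρ
      - d ρ ^ 2 * ρ⁻¹)) atTop (nhds (1 / (8 * π) * (6 * π - 13 * π * 0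
      + 2 * π * (5 + 6 * 0) * 0 - 2 * Real.sqrt π * (2 - 0) * 0 - 0 ^ 2 * 0))) := by
    refine Tendsto.const_mul _ (((((hI.const_mul _).const_sub _).add
      ((((hI.const_mul _).const_add _).const_mul _).mul hE)).sub
      (((hI.const_sub _).const_mul _).mul hD)).sub ((hD.pow 2).mul hI))
  have hval : 1 / (8 * π) * (6 * π - 13 * π * 0
      + 2 * π * (5 + 6 * 0) * 0 - 2 * Real.sqrt π * (2 - 0) * 0 - 0 ^ 2 * 0) = 3 / 4 := by
    have := Real.pi_pos
    field_simp
    norm_num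
    ring
  rw [hval] at hlim
  refine hlim.congr' ?_
  filter_upwards [eventually_gt_atTop (0:ℝ)] with ρ hρ
  have hs : Real.sqrt π ^ 2 = π := Real.sq_sqrt Real.pi_pos.le
  have hpi := Real.pi_pos
  have hb : 2 * Real.sqrt ρ * Real.exp (-ρ)
      + Real.sqrt π * (2 * ρ - 1) * errorFun (Real.sqrt ρ)
      = Real.sqrt π * (2 * ρ - 1) + d ρ := by
    simp only [hd]; ring
  unfold absAreaF2
  rw [hb]
  have hsq : (Real.sqrt π * (2 * ρ - 1) + d ρ) ^ 2 = π * (2 * ρ - 1) ^ 2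
      + 2 * Real.sqrt π * (2 * ρ - 1) * d ρ + d ρ ^ 2 := by
    rw [← hs, Real.sqrt_sq (Real.sqrt_nonneg _)]; ring
  rw [hsq]
  generalize d ρ = D
  generalize Real.sqrt π = S
  field_simp
  ring
end
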